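/- Let α ∈ (1, 2) and β ∈ [−1, 1]. For every x ∈ ℝ, ∫₀^∞ [ (1 − cos(λ x)) + β · tan(π α / 2) · sin(λ x) ] / λ^α dλ = −Γ(1 − α) · sin(π α / 2) · (1 − β · sgn(x)) · |x|^{α − 1}. (This identity evaluates, up to a positive normalizing constant, the renormalized zero resolvent h(x) = (1/K(α))(1 − β sgn(x))|x|^{α−1} of a strictly α-stable Lévy process with positivity asymmetry parameter β.) -/

import Mathlib

open MeasureTheory Real

/-!
For `0 < Re z` and `-1 < Re s < 0` put `F z = ∫₀^∞ t ^ (s - 1) * (1 - exp (-z t)) dt`, the Mellin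
transform of `1 - exp (-z t)`. Integrating by parts against `t ^ s` gives `s F + z F' = 0`, so
`z ^ s * F z` is constant, equal to `F 1 = -Γ(s)`. Both `F` and `-Γ(s) z ^ (-s)` are continuous up
to the imaginary axis; at `z = ± i x` the even and odd parts of the identity evaluate the integrals
of `1 - cos (x t)` and `sin (x t)`, and `s = 1 - α` is the case of interest.
-/

open Filter Set Topology

lemma norm_one_sub_cexp_neg_le {w : ℂ} (hw : 0 ≤ w.re) :
    ‖1 - Complex.exp (-w)‖ ≤ 2 * min 1 ‖w‖ := by
  rcases le_total ‖w‖ 1 with h | h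
  · rw [min_eq_right h, norm_sub_rev, ← norm_neg w]
    exact Complex.norm_exp_sub_one_le (by rwa [norm_neg])
  · calc ‖1 - Complex.exp (-w)‖ ≤ ‖(1 : ℂ)‖ + ‖Complex.exp (-w)‖ := norm_sub_le _ _
      _ ≤ 1 + 1 := by
        rw [norm_one, Complex.norm_exp, Complex.neg_re]
        gcongr
        exact exp_le_one_iff.2 (neg_nonpos.2 hw)
      _ = 2 * min 1 ‖w‖ := by rw [min_eq_left h]; norm_num

lemma norm_one_sub_cexp_neg_mul_le {z : ℂ} (hz : 0 ≤ z.re) {t : ℝ} (ht : 0 < t) :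
    ‖1 - Complex.exp (-(z * t))‖ ≤ 2 * max 1 ‖z‖ * min 1 t := by
  have hre : 0 ≤ (z * t).re := by
    rw [Complex.re_mul_ofReal]
    exact mul_nonneg hz ht.le
  have hmin : min 1 (‖z‖ * t) ≤ max 1 ‖z‖ * min 1 t := by
    rw [mul_min_of_nonneg _ _ (by positivity), mul_one]
    gcongr <;> simp
  calc ‖1 - Complex.exp (-(z * t))‖ ≤ 2 * min 1 ‖z * t‖ := norm_one_sub_cexp_neg_le hre
    _ = 2 * min 1 (‖z‖ * t) := by rw [norm_mul, Complex.norm_of_nonneg ht.le]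
    _ ≤ 2 * max 1 ‖z‖ * min 1 t := by rw [mul_assoc]; gcongr

lemma integrableOn_rpow_mul_min_one {σ : ℝ} (h₁ : -1 < σ) (h₀ : σ < 0) :
    IntegrableOn (fun t : ℝ ↦ t ^ (σ - 1) * min 1 t) (Ioi 0) := by
  refine mellin_convergent_of_isBigO_scalar (a := 0) (b := -1)
    ((by fun_prop : Continuous fun t : ℝ ↦ min 1 t).locallyIntegrable.locallyIntegrableOn _)
    (Asymptotics.IsBigO.of_bound 1 ?_) h₀ (Asymptotics.IsBigO.of_bound 1 ?_) h₁
  · filter_upwards [eventually_ge_atTop 1] with t ht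
    simp [ht]
  · filter_upwards [self_mem_nhdsWithin] with t ht
    rw [mem_Ioi] at ht
    rw [neg_neg, rpow_one, one_mul, norm_of_nonneg (by positivity), norm_of_nonneg ht.le]
    exact min_le_right _ _

section OneSubExp

variable {s z : ℂ}

lemma norm_cpow_smul_one_sub_cexp_neg_mul_le (hz : 0 ≤ z.re) {t : ℝ} (ht : 0 < t) :
    ‖(t : ℂ) ^ (s - 1) • (1 - Complex.exp (-(z * t)))‖ ≤
      2 * max 1 ‖z‖ * (t ^ (s.re - 1) * min 1 t) := by
  rw [norm_smul, Complex.norm_cpow_eq_rpow_re_of_pos ht, Complex.sub_re, Complex.one_re,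
    mul_left_comm]
  gcongr
  exact norm_one_sub_cexp_neg_mul_le hz ht

lemma aestronglyMeasurable_cpow_smul_one_sub_cexp_neg_mul (s z : ℂ) (μ : Measure ℝ) :
    AEStronglyMeasurable (fun t : ℝ ↦ (t : ℂ) ^ (s - 1) • (1 - Complex.exp (-(z * t)))) μ :=
  Measurable.aestronglyMeasurable (by fun_prop)

lemma mellinConvergent_one_sub_cexp_neg_mul (h₁ : -1 < s.re) (h₀ : s.re < 0) (hz : 0 ≤ z.re) :
    MellinConvergent (fun t : ℝ ↦ 1 - Complex.exp (-(z * t))) s := by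
  refine ((integrableOn_rpow_mul_min_one h₁ h₀).const_mul (2 * max 1 ‖z‖)).mono'
    (aestronglyMeasurable_cpow_smul_one_sub_cexp_neg_mul s z _) ?_
  filter_upwards [ae_restrict_mem measurableSet_Ioi] with t ht
  exact norm_cpow_smul_one_sub_cexp_neg_mul_le hz ht

lemma continuousOn_mellin_one_sub_cexp_neg_mul (h₁ : -1 < s.re) (h₀ : s.re < 0) :
    ContinuousOn (fun z : ℂ ↦ mellin (fun t : ℝ ↦ 1 - Complex.exp (-(z * t))) s)
      {z | 0 ≤ z.re} := by
  intro z _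
  refine continuousWithinAt_of_dominated
    (bound := fun t ↦ 2 * max 1 (‖z‖ + 1) * (t ^ (s.re - 1) * min 1 t))
    (.of_forall fun w ↦ aestronglyMeasurable_cpow_smul_one_sub_cexp_neg_mul s w _) ?_
    ((integrableOn_rpow_mul_min_one h₁ h₀).const_mul _)
    (.of_forall fun t ↦ by fun_prop)
  have hnorm : ∀ᶠ w in 𝓝[{w : ℂ | 0 ≤ w.re}] z, ‖w‖ ≤ ‖z‖ + 1 :=
    (continuous_norm.continuousWithinAt.eventually_lt_const (lt_add_one ‖z‖)).mono fun _ ↦ le_of_lt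
  filter_upwards [self_mem_nhdsWithin, hnorm] with w hw hwz
  filter_upwards [ae_restrict_mem measurableSet_Ioi] with t ht
  rw [mem_Ioi] at ht
  refine (norm_cpow_smul_one_sub_cexp_neg_mul_le hw ht).trans ?_
  gcongr

lemma mellinConvergent_cexp_neg_mul (hs : 0 < s.re) (hz : 0 < z.re) :
    MellinConvergent (fun t : ℝ ↦ Complex.exp (-(z * t))) s := by
  have hcont : Continuous fun t : ℝ ↦ Complex.exp (-(z * t)) := by fun_prop
  refine mellinConvergent_of_isBigO_rpow_exp (b := 0) hz
    (hcont.locallyIntegrable.locallyIntegrableOn _) (.of_bound 1 (.of_forall fun t ↦ ?_)) ?_ hs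
  · simp [Complex.norm_exp]
  · simpa using (hcont.tendsto 0).isBigO_one ℝ |>.mono nhdsWithin_le_nhds

lemma hasDerivAt_mellin_one_sub_cexp_neg_mul (h₁ : -1 < s.re) (h₀ : s.re < 0) (hz : 0 < z.re) :
    HasDerivAt (fun z : ℂ ↦ mellin (fun t : ℝ ↦ 1 - Complex.exp (-(z * t))) s)
      (mellin (fun t : ℝ ↦ Complex.exp (-(z * t))) (s + 1)) z := by
  have hz₂ : 0 < z.re / 2 := half_pos hz
  have hs : 0 < (s + 1).re := by rw [Complex.add_re, Complex.one_re]; linarith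
  have hnhds : {w : ℂ | z.re / 2 < w.re} ∈ 𝓝 z :=
    (isOpen_lt continuous_const Complex.continuous_re).mem_nhds (half_lt_self hz)
  refine (hasDerivAt_integral_of_dominated_loc_of_deriv_le hnhds
    (F' := fun w (t : ℝ) ↦ (t : ℂ) ^ (s + 1 - 1) • Complex.exp (-(w * t)))
    (.of_forall fun w ↦ aestronglyMeasurable_cpow_smul_one_sub_cexp_neg_mul s w _)
    (mellinConvergent_one_sub_cexp_neg_mul h₁ h₀ hz.le)
    (Measurable.aestronglyMeasurable (by fun_prop)) ?_
    (mellinConvergent_cexp_neg_mul hs (z := ↑(z.re / 2)) hz₂).norm ?_).2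
  · filter_upwards [ae_restrict_mem measurableSet_Ioi] with t ht w hw
    rw [norm_smul, norm_smul, Complex.norm_exp, Complex.norm_exp, Complex.neg_re, Complex.neg_re,
      Complex.re_mul_ofReal, Complex.re_mul_ofReal, Complex.ofReal_re]
    have := mul_le_mul_of_nonneg_right (le_of_lt hw) (le_of_lt ht)
    gcongr
  · filter_upwards [ae_restrict_mem measurableSet_Ioi] with t ht w _
    have ht₀ : (t : ℂ) ≠ 0 := Complex.ofReal_ne_zero.2 (ne_of_gt ht)
    refine (((((hasDerivAt_id w).mul_const (t : ℂ)).neg.cexp).const_sub 1).const_smul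
      ((t : ℂ) ^ (s - 1))).congr_deriv ?_
    rw [add_sub_right_comm, Complex.cpow_add _ _ ht₀, Complex.cpow_one]
    simp only [id, Pi.neg_apply, smul_eq_mul]
    ring

lemma tendsto_rpow_mul_min_one_nhdsGT_zero {σ : ℝ} (hσ : -1 < σ) :
    Tendsto (fun t : ℝ ↦ t ^ σ * min 1 t) (𝓝[>] 0) (𝓝 0) := by
  have hσ' : 0 < σ + 1 := by linarith
  have hlim : Tendsto (fun t : ℝ ↦ t ^ (σ + 1)) (𝓝[>] 0) (𝓝 0) := by
    simpa [zero_rpow hσ'.ne'] using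
      (continuousAt_rpow_const 0 (σ + 1) (Or.inr hσ'.le)).tendsto.mono_left nhdsWithin_le_nhds
  refine squeeze_zero' ?_ ?_ hlim <;> filter_upwards [self_mem_nhdsWithin] with t ht
  · have ht₀ : 0 < t := ht
    positivity
  · rw [rpow_add_one (ne_of_gt ht)]
    exact mul_le_mul_of_nonneg_left (min_le_right _ _) (rpow_nonneg (mem_Ioi.1 ht).le _)

lemma tendsto_rpow_mul_min_one_atTop {σ : ℝ} (hσ : σ < 0) :
    Tendsto (fun t : ℝ ↦ t ^ σ * min 1 t) atTop (𝓝 0) := by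
  have hlim : Tendsto (fun t : ℝ ↦ t ^ σ) atTop (𝓝 0) := by
    simpa using tendsto_rpow_neg_atTop (neg_pos.2 hσ)
  refine hlim.congr' ?_
  filter_upwards [eventually_ge_atTop 1] with t ht
  rw [min_eq_left ht, mul_one]

lemma tendsto_one_sub_cexp_neg_mul_mul_cpow {l : Filter ℝ} (hl : ∀ᶠ t in l, 0 < t)
    (hz : 0 ≤ z.re) (hlim : Tendsto (fun t : ℝ ↦ t ^ s.re * min 1 t) l (𝓝 0)) :
    Tendsto (fun t : ℝ ↦ (1 - Complex.exp (-(z * t))) * (t : ℂ) ^ s) l (𝓝 0) := by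
  refine squeeze_zero_norm' ?_ (by simpa only [mul_zero] using hlim.const_mul (2 * max 1 ‖z‖))
  filter_upwards [hl] with t ht
  simpa [mul_comm] using norm_cpow_smul_one_sub_cexp_neg_mul_le (s := s + 1) hz ht

lemma hasDerivAt_one_sub_cexp_neg_mul (z : ℂ) (t : ℝ) :
    HasDerivAt (fun t : ℝ ↦ 1 - Complex.exp (-(z * t))) (z * Complex.exp (-(z * t))) t := by
  have h := (((hasDerivAt_id t).ofReal_comp.const_mul z).neg.cexp).const_sub 1
  simpa [mul_comm] using h

lemma mul_mellin_one_sub_cexp_neg_mul (h₁ : -1 < s.re) (h₀ : s.re < 0) (hz : 0 < z.re) :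
    s * mellin (fun t : ℝ ↦ 1 - Complex.exp (-(z * t))) s =
      -(z * mellin (fun t : ℝ ↦ Complex.exp (-(z * t))) (s + 1)) := by
  have hs : s ≠ 0 := fun h ↦ by simp [h] at h₀
  have hs₁ : 0 < (s + 1).re := by rw [Complex.add_re, Complex.one_re]; linarith
  have hparts := integral_Ioi_mul_deriv_eq_deriv_mul
    (fun t _ ↦ hasDerivAt_one_sub_cexp_neg_mul z t)
    (fun t ht ↦ hasDerivAt_ofReal_cpow_const (ne_of_gt ht) hs)
    (((mellinConvergent_one_sub_cexp_neg_mul h₁ h₀ hz.le).const_mul s).congr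
      (.of_forall fun t ↦ by simp only [Pi.mul_apply, smul_eq_mul]; ring))
    (((mellinConvergent_cexp_neg_mul hs₁ hz).const_mul z).congr
      (.of_forall fun t ↦ by simp only [Pi.mul_apply, smul_eq_mul, add_sub_cancel_right]; ring))
    (tendsto_one_sub_cexp_neg_mul_mul_cpow self_mem_nhdsWithin hz.le
      (tendsto_rpow_mul_min_one_nhdsGT_zero h₁))
    (tendsto_one_sub_cexp_neg_mul_mul_cpow (eventually_gt_atTop 0) hz.le
      (tendsto_rpow_mul_min_one_atTop h₀))
  calc s * mellin (fun t : ℝ ↦ 1 - Complex.exp (-(z * t))) s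
      = ∫ t in Ioi (0 : ℝ), (1 - Complex.exp (-(z * t))) * (s * (t : ℂ) ^ (s - 1)) := by
        simp only [mellin, smul_eq_mul, ← integral_const_mul, mul_assoc, mul_comm]
    _ = -∫ t in Ioi (0 : ℝ), z * Complex.exp (-(z * t)) * (t : ℂ) ^ s := by
        rw [hparts, sub_self, zero_sub]
    _ = -(z * mellin (fun t : ℝ ↦ Complex.exp (-(z * t))) (s + 1)) := by
        simp only [mellin, smul_eq_mul, add_sub_cancel_right, mul_assoc, integral_const_mul,
          mul_comm (Complex.exp _)]

lemma mellin_one_sub_cexp_neg (h₁ : -1 < s.re) (h₀ : s.re < 0) :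
    mellin (fun t : ℝ ↦ 1 - Complex.exp (-t)) s = -Complex.Gamma s := by
  have hs : s ≠ 0 := fun h ↦ by simp [h] at h₀
  have hs₁ : 0 < (s + 1).re := by rw [Complex.add_re, Complex.one_re]; linarith
  have hparts := mul_mellin_one_sub_cexp_neg_mul h₁ h₀ (z := 1) (by simp)
  have hGamma : mellin (fun t : ℝ ↦ Complex.exp (-t)) (s + 1) = s * Complex.Gamma s := by
    rw [← Complex.Gamma_add_one s hs, Complex.Gamma_eq_integral hs₁,
      Complex.GammaIntegral_eq_mellin]
    simp only [Complex.ofReal_exp, Complex.ofReal_neg]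
  simp only [one_mul, hGamma, ← mul_neg] at hparts
  exact mul_left_cancel₀ hs hparts

lemma mellin_one_sub_cexp_neg_mul_of_re_pos (h₁ : -1 < s.re) (h₀ : s.re < 0) (hz : 0 < z.re) :
    mellin (fun t : ℝ ↦ 1 - Complex.exp (-(z * t))) s = -Complex.Gamma s * z ^ (-s) := by
  set F : ℂ → ℂ := fun w ↦ mellin (fun t : ℝ ↦ 1 - Complex.exp (-(w * t))) s
  have hderiv (w : ℂ) (hw : 0 < w.re) : HasDerivAt (fun w ↦ w ^ s * F w) 0 w := by
    have hw₀ : w ≠ 0 := fun h ↦ by simp [h] at hw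
    refine ((hasDerivAt_id w).cpow_const (Or.inl hw)).mul
      (hasDerivAt_mellin_one_sub_cexp_neg_mul h₁ h₀ hw) |>.congr_deriv ?_
    have hparts := mul_mellin_one_sub_cexp_neg_mul h₁ h₀ hw
    rw [id, Complex.cpow_sub _ _ hw₀, Complex.cpow_one]
    field_simp
    linear_combination w ^ s * hparts
  have hconst : z ^ s * F z = 1 ^ s * F 1 :=
    (isOpen_lt continuous_const Complex.continuous_re).is_const_of_deriv_eq_zero
      (convex_halfSpace_re_gt 0).isPreconnected
      (fun w hw ↦ (hderiv w hw).differentiableAt.differentiableWithinAt)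
      (fun w hw ↦ (hderiv w hw).deriv) hz (by simp)
  have hz₀ : z ≠ 0 := fun h ↦ by simp [h] at hz
  rw [Complex.one_cpow, one_mul] at hconst
  have hF₁ : F 1 = -Complex.Gamma s := by simpa [F] using mellin_one_sub_cexp_neg h₁ h₀
  rw [← hF₁, ← hconst, mul_right_comm, ← Complex.cpow_add _ _ hz₀, add_neg_cancel,
    Complex.cpow_zero, one_mul]

lemma hasMellin_one_sub_cexp_neg_mul (h₁ : -1 < s.re) (h₀ : s.re < 0) (hz : 0 ≤ z.re) :
    HasMellin (fun t : ℝ ↦ 1 - Complex.exp (-(z * t))) s (-Complex.Gamma s * z ^ (-s)) := by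
  refine ⟨mellinConvergent_one_sub_cexp_neg_mul h₁ h₀ hz, ?_⟩
  have hpow : ContinuousOn (fun z : ℂ ↦ -Complex.Gamma s * z ^ (-s)) {z | 0 ≤ z.re} := fun w hw ↦
    ((Complex.continuousAt_cpow_const_of_re_pos (Or.inl hw)
      (by simpa using h₀)).const_mul _).continuousWithinAt
  have heq : EqOn (fun z : ℂ ↦ mellin (fun t : ℝ ↦ 1 - Complex.exp (-(z * t))) s)
      (fun z ↦ -Complex.Gamma s * z ^ (-s)) {z | 0 < z.re} :=
    fun _ hw ↦ mellin_one_sub_cexp_neg_mul_of_re_pos h₁ h₀ hw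
  exact heq.of_subset_closure (continuousOn_mellin_one_sub_cexp_neg_mul h₁ h₀) hpow
    (fun _ hw ↦ (mem_ofPred.1 hw).le) (Complex.closure_setOfPred_lt_re 0).ge hz

lemma ofReal_mul_cpow {r : ℝ} (hr : 0 < r) {w : ℂ} (hw : w ≠ 0) (a : ℂ) :
    (r * w) ^ a = (r : ℂ) ^ a * w ^ a := by
  have hr₀ : (r : ℂ) ≠ 0 := Complex.ofReal_ne_zero.2 hr.ne'
  rw [Complex.cpow_def_of_ne_zero (mul_ne_zero hr₀ hw), Complex.cpow_def_of_ne_zero hr₀,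
    Complex.cpow_def_of_ne_zero hw, Complex.log_ofReal_mul hr hw, Complex.ofReal_log hr.le, add_mul,
    Complex.exp_add]

lemma I_cpow (a : ℂ) :
    Complex.I ^ a = Complex.cos (π * a / 2) + Complex.sin (π * a / 2) * Complex.I := by
  rw [Complex.cpow_def_of_ne_zero Complex.I_ne_zero, Complex.log_I, ← Complex.exp_mul_I]
  ring_nf

lemma neg_I_cpow (a : ℂ) :
    (-Complex.I) ^ a = Complex.cos (π * a / 2) - Complex.sin (π * a / 2) * Complex.I := by
  rw [Complex.cpow_def_of_ne_zero (neg_ne_zero.2 Complex.I_ne_zero), Complex.log_neg_I,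
    show -(π / 2) * Complex.I * a = -(π * a / 2) * Complex.I by ring, ← Complex.cos_sub_sin_I]

lemma ofReal_mul_I_cpow (x : ℝ) {a : ℂ} (ha : a ≠ 0) :
    (x * Complex.I) ^ a = (|x| : ℝ) ^ a *
      (Complex.cos (π * a / 2) + Real.sign x * Complex.sin (π * a / 2) * Complex.I) := by
  rcases lt_trichotomy x 0 with hx | rfl | hx
  · have hx' : (x * Complex.I : ℂ) = (-x : ℝ) * -Complex.I := by push_cast; ring
    rw [hx', ofReal_mul_cpow (neg_pos.2 hx) (neg_ne_zero.2 Complex.I_ne_zero), neg_I_cpow,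
      abs_of_neg hx, sign_of_neg hx]
    push_cast
    ring
  · simp [ha]
  · rw [ofReal_mul_cpow hx Complex.I_ne_zero, I_cpow, abs_of_pos hx, sign_of_pos hx,
      Complex.ofReal_one, one_mul]

lemma hasMellin_one_sub_cexp_neg_mul_I (h₁ : -1 < s.re) (h₀ : s.re < 0) (x : ℝ) :
    HasMellin (fun t : ℝ ↦ 1 - Complex.exp (-(x * Complex.I * t))) s
      (-Complex.Gamma s * (|x| : ℝ) ^ (-s) *
        (Complex.cos (π * s / 2) - Real.sign x * Complex.sin (π * s / 2) * Complex.I)) := by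
  have hs : -s ≠ 0 := fun h ↦ by simp [neg_eq_zero.1 h] at h₀
  have h := hasMellin_one_sub_cexp_neg_mul h₁ h₀ (z := x * Complex.I) (by simp)
  rw [ofReal_mul_I_cpow x hs] at h
  simpa [neg_div, mul_assoc, sub_eq_add_neg] using h

lemma hasMellin_one_sub_cos (h₁ : -1 < s.re) (h₀ : s.re < 0) (x : ℝ) :
    HasMellin (fun t : ℝ ↦ 1 - Complex.cos (t * x)) s
      (-Complex.Gamma s * Complex.cos (π * s / 2) * (|x| : ℝ) ^ (-s)) := by
  have hpos := hasMellin_one_sub_cexp_neg_mul_I h₁ h₀ x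
  have hneg := hasMellin_one_sub_cexp_neg_mul_I h₁ h₀ (-x)
  have hadd := hasMellin_add hpos.1 hneg.1
  have h := hasMellin_const_smul hadd.1 (2⁻¹ : ℂ)
  rw [hadd.2, hpos.2, hneg.2, abs_neg, sign_neg] at h
  convert h using 2 with t
  · rw [Complex.cos, smul_eq_mul, Complex.ofReal_neg]
    ring_nf
  · rw [smul_eq_mul, Complex.ofReal_neg]
    ring

lemma hasMellin_sin (h₁ : -1 < s.re) (h₀ : s.re < 0) (x : ℝ) :
    HasMellin (fun t : ℝ ↦ Complex.sin (t * x)) s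
      (Complex.Gamma s * Complex.sin (π * s / 2) * Real.sign x * (|x| : ℝ) ^ (-s)) := by
  have hpos := hasMellin_one_sub_cexp_neg_mul_I h₁ h₀ x
  have hneg := hasMellin_one_sub_cexp_neg_mul_I h₁ h₀ (-x)
  have hsub := hasMellin_sub hpos.1 hneg.1
  have h := hasMellin_const_smul hsub.1 (-Complex.I / 2)
  rw [hsub.2, hpos.2, hneg.2, abs_neg, sign_neg] at h
  convert h using 2 with t
  · rw [Complex.sin, smul_eq_mul, Complex.ofReal_neg]
    ring_nf
  · rw [smul_eq_mul, Complex.ofReal_neg]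
    linear_combination (Complex.Gamma s * Complex.sin (π * s / 2) * Real.sign x *
      (|x| : ℝ) ^ (-s)) * Complex.I_sq

end OneSubExp

lemma mellin_ofReal (f : ℝ → ℝ) (σ : ℝ) :
    mellin (fun t ↦ (f t : ℂ)) σ = (∫ t in Ioi 0, t ^ (σ - 1) * f t : ℝ) := by
  rw [mellin, ← integral_complex_ofReal]
  refine setIntegral_congr_fun measurableSet_Ioi fun t ht ↦ ?_
  simp [Complex.ofReal_cpow (le_of_lt ht)]

lemma integral_one_sub_cos_add_mul_sin_div_rpow {α : ℝ} (h₁ : 1 < α) (h₂ : α < 2) (c x : ℝ) :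
    ∫ t in Ioi (0 : ℝ), ((1 - cos (t * x)) + c * sin (t * x)) / t ^ α =
      -Gamma (1 - α) * (sin (π * α / 2) - c * Real.sign x * cos (π * α / 2)) * |x| ^ (α - 1) := by
  have hs₁ : -1 < ((1 - α : ℝ) : ℂ).re := by rw [Complex.ofReal_re]; linarith
  have hs₀ : ((1 - α : ℝ) : ℂ).re < 0 := by rw [Complex.ofReal_re]; linarith
  have hcos := hasMellin_one_sub_cos hs₁ hs₀ x
  have hsin := hasMellin_sin hs₁ hs₀ x
  have hsmul := hasMellin_const_smul hsin.1 (c : ℂ)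
  have h := (hasMellin_add hcos.1 hsmul.1).2
  rw [hcos.2, hsmul.2, hsin.2] at h
  have hmellin : ∫ t in Ioi (0 : ℝ), ((1 - cos (t * x)) + c * sin (t * x)) / t ^ α =
      ∫ t in Ioi (0 : ℝ), t ^ (1 - α - 1) * ((1 - cos (t * x)) + c * sin (t * x)) := by
    refine setIntegral_congr_fun measurableSet_Ioi fun t ht ↦ ?_
    rw [sub_sub_cancel_left, rpow_neg (le_of_lt ht), div_eq_inv_mul]
  have hangle : (π * (1 - α : ℝ) / 2 : ℂ) = (π / 2 - π * α / 2 : ℝ) := by push_cast; ring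
  rw [hangle, ← Complex.ofReal_cos, ← Complex.ofReal_sin, cos_pi_div_two_sub, sin_pi_div_two_sub,
    Complex.Gamma_ofReal, ← Complex.ofReal_neg (1 - α), ← Complex.ofReal_cpow (abs_nonneg x),
    neg_sub] at h
  rw [hmellin, ← Complex.ofReal_inj, ← mellin_ofReal]
  simp only [smul_eq_mul] at h
  push_cast at h ⊢
  rw [h]
  ring

theorem integral_stable_renormalized_resolvent_general (α β : ℝ) (hα : α ∈ Set.Ioo (1 : ℝ) 2)
    (x : ℝ) :
    ∫ l in Set.Ioi (0 : ℝ),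
        ((1 - Real.cos (l * x)) + β * Real.tan (π * α / 2) * Real.sin (l * x)) / l ^ α
      = -Real.Gamma (1 - α) * Real.sin (π * α / 2) * (1 - β * Real.sign x) * |x| ^ (α - 1) := by
  have hcos : cos (π * α / 2) < 0 := by
    apply cos_neg_of_pi_div_two_lt_of_lt <;> nlinarith [pi_pos, hα.1, hα.2]
  have htan : tan (π * α / 2) * cos (π * α / 2) = sin (π * α / 2) := tan_mul_cos hcos.ne
  rw [integral_one_sub_cos_add_mul_sin_div_rpow hα.1 hα.2]
  linear_combination Gamma (1 - α) * β * Real.sign x * |x| ^ (α - 1) * htan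

/-- For `α ∈ (1,2)`, `β ∈ [−1,1]` and every `x : ℝ`,
`∫₀^∞ [(1 − cos(λx)) + β·tan(πα/2)·sin(λx)]/λ^α dλ
  = −Γ(1 − α)·sin(πα/2)·(1 − β·sgn(x))·|x|^{α−1}`.
This evaluates, up to a positive normalizing constant, the renormalized zero resolvent
`h(x) = (1/K(α))(1 − β·sgn(x))|x|^{α−1}` of a strictly `α`-stable Lévy process with
positivity asymmetry parameter `β`. -/
theorem integral_stable_renormalized_resolvent (α β : ℝ) (hα : α ∈ Set.Ioo (1 : ℝ) 2)
    (hβ : β ∈ Set.Icc (-1 : ℝ) 1) (x : ℝ) :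
    ∫ l in Set.Ioi (0 : ℝ),
        ((1 - Real.cos (l * x)) + β * Real.tan (π * α / 2) * Real.sin (l * x)) / l ^ α
      = -Real.Gamma (1 - α) * Real.sin (π * α / 2) * (1 - β * Real.sign x) * |x| ^ (α - 1) :=
  integral_stable_renormalized_resolvent_general α β hα x
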